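/- Let (W, S) be an arbitrary Coxeter system and let y ∈ W_c be fully commutative. If y is left star reducible to y′, then 𝓡(y′) = 𝓡(y) and |𝓛(y′)| ≥ |𝓛(y)|; symmetrically, if y is right star reducible to y′, then 𝓛(y′) = 𝓛(y) and |𝓡(y′)| ≥ |𝓡(y)|. -/

import Mathlib

open CoxeterSystem

variable {B W : Type*} [Group W] {M : CoxeterMatrix B} (cs : CoxeterSystem M W)

/-- `m(s,t) ≥ 3`: `s` and `t` are distinct noncommuting generators
(`M s t = 0` encodes `m(s,t) = ∞`). -/
def Noncomm (M : CoxeterMatrix B) (s t : B) : Prop := M s t = 0 ∨ 3 ≤ M s t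

/-- The longest element `w_{st}` of the rank-2 parabolic subgroup `⟨s,t⟩`
(meaningful when `3 ≤ M s t < ∞`). -/
def longest (s t : B) : W := cs.wordProd (alternatingWord s t (M s t))

/-- `w` is complex: it admits a reduced factorization `x₁ · w_{st} · x₂` where `w_{st}`
is the longest element of a rank-2 parabolic subgroup `⟨s,t⟩` with `3 ≤ m(s,t) < ∞`. -/
def IsComplex (w : W) : Prop :=
  ∃ s t : B, 3 ≤ M s t ∧ ∃ x₁ x₂ : W,
    w = x₁ * longest cs s t * x₂ ∧
    cs.length w = cs.length x₁ + cs.length (longest cs s t : W) + cs.length x₂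

/-- `w` is fully commutative, i.e. `w ∈ W_c`. -/
def FullyComm (w : W) : Prop := ¬ IsComplex cs w

/-- `x` is weakly complex: `x` is complex and `x = s·u` reduced with `u` fully commutative. -/
def IsWeaklyComplex (x : W) : Prop :=
  IsComplex cs x ∧ ∃ (s : B) (u : W), FullyComm cs u ∧ x = cs.simple s * u ∧
    cs.length x = 1 + cs.length u

/-- The alternating product `t s t s ⋯` with `k` factors, beginning with `t`. -/
def altProd (t s : B) (k : ℕ) : W :=
  cs.wordProd ((List.range k).map (fun i => if i % 2 = 0 then t else s))

/-- The left descent set `𝓛(w)`. -/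
def leftDescents (w : W) : Set B := {i | cs.IsLeftDescent w i}

/-- The right descent set `𝓡(w)`. -/
def rightDescents (w : W) : Set B := {i | cs.IsRightDescent w i}

/-- `w` is a reduced product of distinct pairwise commuting generators. -/
def IsCommProd (w : W) : Prop :=
  ∃ l : List B, l.Nodup ∧ (∀ u ∈ l, ∀ u' ∈ l, u ≠ u' → M u u' = 2) ∧
    cs.IsReduced l ∧ w = cs.wordProd l

/-- `y` is left star reducible to `x` with respect to the pair `{s,t}`:
`x` and `y` lie in the same left `{s,t}`-string and `ℓ(x) = ℓ(y) − 1`. -/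
def LeftStarReducible (s t : B) (y x : W) : Prop :=
  Noncomm M s t ∧
  ((cs.IsLeftDescent y s ∧ ¬ cs.IsLeftDescent y t ∧ x = cs.simple s * y ∧
      cs.IsLeftDescent x t) ∨
   (cs.IsLeftDescent y t ∧ ¬ cs.IsLeftDescent y s ∧ x = cs.simple t * y ∧
      cs.IsLeftDescent x s))

/-- `y` is right star reducible to `x` with respect to the pair `{s,t}`. -/
def RightStarReducible (s t : B) (y x : W) : Prop :=
  Noncomm M s t ∧
  ((cs.IsRightDescent y s ∧ ¬ cs.IsRightDescent y t ∧ x = y * cs.simple s ∧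
      cs.IsRightDescent x t) ∨
   (cs.IsRightDescent y t ∧ ¬ cs.IsRightDescent y s ∧ x = y * cs.simple t ∧
      cs.IsRightDescent x s))

/-- `y` is star reducible to `x`: there is a (possibly empty) chain of left and right
star reductions from `y` to `x`. -/
def StarReducible (y x : W) : Prop :=
  Relation.ReflTransGen
    (fun a b => ∃ s t : B, LeftStarReducible cs s t a b ∨ RightStarReducible cs s t a b) y x

/-- Property F: every fully commutative element is star reducible to a reduced product of
distinct pairwise commuting generators. -/
def PropertyF : Prop := ∀ w : W, FullyComm cs w → ∃ x : W, StarReducible cs w x ∧ IsCommProd cs x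

/-- `n(w)`: the maximum `k` such that `w` admits a reduced factorization `w = w₁·w₂·w₃`
with `w₂` a reduced product of `k` distinct pairwise commuting generators. -/
noncomputable def nval (w : W) : ℕ :=
  sSup {k | ∃ w₁ w₂ w₃ : W, w = w₁ * w₂ * w₃ ∧
    cs.length w = cs.length w₁ + cs.length w₂ + cs.length w₃ ∧
    IsCommProd cs w₂ ∧ cs.length w₂ = k}

/-- The Bruhat order: `x ≤ w` iff some reduced word for `w` has a subword that is a
reduced word for `x`. -/
def BruhatLE (x w : W) : Prop :=
  ∃ l l' : List B, cs.IsReduced l ∧ cs.wordProd l = w ∧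
    l'.Sublist l ∧ cs.IsReduced l' ∧ cs.wordProd l' = x

/-- `w = wI · wII` is the coset decomposition of `w` with respect to `I = {s,t}`:
`wI ∈ W_I`, `𝓛(wII) ∩ I = ∅` and `ℓ(w) = ℓ(wI) + ℓ(wII)`. -/
def CosetDecompL (s t : B) (w wI wII : W) : Prop :=
  w = wI * wII ∧ wI ∈ Subgroup.closure {cs.simple s, cs.simple t} ∧
  ¬ cs.IsLeftDescent wII s ∧ ¬ cs.IsLeftDescent wII t ∧
  cs.length w = cs.length wI + cs.length wII

/-- `w = wII · wI` is the right coset decomposition of `w` with respect to `I = {s,t}`: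
`wI ∈ W_I`, `𝓡(wII) ∩ I = ∅` and `ℓ(w) = ℓ(wII) + ℓ(wI)`. -/
def CosetDecompR (s t : B) (w wII wI : W) : Prop :=
  w = wII * wI ∧ wI ∈ Subgroup.closure {cs.simple s, cs.simple t} ∧
  ¬ cs.IsRightDescent wII s ∧ ¬ cs.IsRightDescent wII t ∧
  cs.length w = cs.length wII + cs.length wI

/-- `k_ε(J) = (−1)^{|J ∩ ε⁻¹(0)|}` for a set `J` of generators. -/
noncomputable def kSet (ε : B → Bool) (J : Set B) : ℤ :=
  (-1) ^ (J ∩ {i | ε i = false}).ncard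

/-- `k_ε(w) = k_ε(𝓛(w)) · k_ε(𝓡(w))`. -/
noncomputable def kElt (ε : B → Bool) (w : W) : ℤ :=
  kSet ε (leftDescents cs w) * kSet ε (rightDescents cs w)

/-!
Each simple generator `s i` acts on pairs of an element of `W` and a sign by conjugating the
element and flipping the sign at `s i`. These maps satisfy the Coxeter relations, so the parity
with which `x` occurs in the right inversion sequence of a word depends only on the product of the
word. Hence a right descent of `w` contributes its generator to the inversion sequence of every
word for `w`, which gives two exchange rules: a right descent `j` of `s i * w` is a right descent
of `w` unless `s i * w = w * s j`, and deleting a right descent `i` of `w` keeps every other right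
descent. The second rule needs `s i ≠ s j` for `i ≠ j`, which is read off the geometric
representation.

Let `y' = y * s i` be a right star reduction, with `j` a right descent of `y'` but not of `y`. A
left descent `u` of `y` that is not one of `y'` would satisfy `s u * y' = y' * s i = y` by the
first rule, so `y * s j = s u * (y' * s j)` would be shorter than `y`; hence the left descents
agree. By the second rule `y'` loses at most the right descent `i`, and it gains `j`. Inversion
exchanges left and right star reductions.
-/

section Exchange

open List

theorem lift_wordProd {G : Type*} [Monoid G] {f : B → G} (hf : M.IsLiftable f) (ω : List B) :
    cs.lift ⟨f, hf⟩ (cs.wordProd ω) = (ω.map f).prod := by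
  simp only [wordProd, map_list_prod, map_map, Function.comp_def, lift_apply_simple]

theorem prod_map_alternatingWord_two_mul {G : Type*} [Monoid G] (f : B → G) (i j : B) (m : ℕ) :
    ((alternatingWord i j (2 * m)).map f).prod = (f i * f j) ^ m := by
  induction m with
  | zero => simp [alternatingWord]
  | succ m ih =>
    rw [mul_add_one, alternatingWord_succ, alternatingWord_succ]
    simp [ih, pow_succ]

theorem rightInvSeq_alternatingWord (i j : B) (k : ℕ) :
    cs.rightInvSeq (alternatingWord i j k) =
      ((range k).map fun n => cs.simple j * (cs.simple i * cs.simple j) ^ n).reverse := by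
  induction k generalizing i j with
  | zero => simp [alternatingWord]
  | succ k ih =>
    have conj_pow (n : ℕ) : cs.simple j * (cs.simple i * (cs.simple j * cs.simple i) ^ n) *
        cs.simple j = cs.simple j * (cs.simple i * cs.simple j) ^ (n + 1) := by
      rw [mul_assoc, ← mul_pow_mul, mul_assoc, ← pow_succ]
    rw [alternatingWord_succ, rightInvSeq_concat, ih, range_succ_eq_map]
    simp [Function.comp_def, conj_pow]

variable [DecidableEq W]

theorem even_count_rightInvSeq_alternatingWord (i j : B) (x : W) :
    Even ((cs.rightInvSeq (alternatingWord i j (2 * M i j))).count x) := by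
  rw [rightInvSeq_alternatingWord, count_reverse, two_mul, range_add, map_append, map_map,
    count_append]
  simp [Function.comp_def, pow_add]

/-- The action of the `i`th simple generator on pairs `(x, ε)` that conjugates `x` and flips the
sign `ε` (written additively) exactly when `x = s i`. A word sends `ε` to `ε` plus the number of
times `x` occurs in its right inversion sequence, which makes the parity of that number an invariant
of the product of the word. -/
def signedConj (i : B) : Function.End (W × ZMod 2) :=
  fun p => (cs.simple i * p.1 * cs.simple i, p.2 + if p.1 = cs.simple i then 1 else 0)

theorem prod_map_signedConj_apply (ω : List B) (p : W × ZMod 2) :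
    (ω.map (signedConj cs)).prod p =
      (cs.wordProd ω * p.1 * (cs.wordProd ω)⁻¹, p.2 + ((cs.rightInvSeq ω).count p.1 : ZMod 2)) := by
  induction ω with
  | nil =>
    change p = _
    simp
  | cons i ω ih =>
    have conj_eq_simple_iff : cs.wordProd ω * p.1 * (cs.wordProd ω)⁻¹ = cs.simple i ↔
        (cs.wordProd ω)⁻¹ * cs.simple i * cs.wordProd ω = p.1 := by
      rw [mul_inv_eq_iff_eq_mul, ← eq_inv_mul_iff_mul_eq, eq_comm, mul_assoc]
    simp only [mul_assoc] at conj_eq_simple_iff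
    change signedConj cs i ((ω.map (signedConj cs)).prod p) = _
    rw [ih, signedConj, rightInvSeq, wordProd_cons, count_cons]
    simp [conj_eq_simple_iff, mul_assoc, add_assoc]

theorem isLiftable_signedConj : M.IsLiftable (signedConj cs) := by
  intro i j
  have wordProd_eq_one : cs.wordProd (alternatingWord i j (2 * M i j)) = 1 := by
    rw [wordProd, prod_map_alternatingWord_two_mul, simple_mul_simple_pow]
  have count_eq_zero (x : W) :=
    (ZMod.natCast_eq_zero_iff_even).2 (even_count_rightInvSeq_alternatingWord cs i j x)
  funext p
  rw [← prod_map_alternatingWord_two_mul, prod_map_signedConj_apply, wordProd_eq_one,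
    count_eq_zero]
  simp only [one_mul, inv_one, mul_one, add_zero]
  rfl

theorem count_rightInvSeq_congr {ω ω' : List B} (h : cs.wordProd ω = cs.wordProd ω') (x : W) :
    ((cs.rightInvSeq ω).count x : ZMod 2) = (cs.rightInvSeq ω').count x := by
  have lift_eq := congrArg (fun w => cs.lift ⟨_, isLiftable_signedConj cs⟩ w (x, 0)) h
  simp only [lift_wordProd, prod_map_signedConj_apply, zero_add] at lift_eq
  exact congrArg Prod.snd lift_eq

end Exchange

section Geometric

open Module Real Polynomial.Chebyshev

theorem reflection_mul_reflection_sq_eq_one {R V : Type*} [CommRing R] [AddCommGroup V] [Module R V]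
    {x y : V} {f g : Dual R V} (hf : f x = 2) (hg : g y = 2) (hfy : f y = 0) (hgx : g x = 0) :
    (reflection hf * reflection hg) ^ 2 = 1 := by
  ext v
  simp only [pow_two, LinearEquiv.mul_apply, reflection_apply, map_sub, map_smul, hf, hg, hfy, hgx,
    LinearEquiv.coe_one, id_eq]
  module

theorem sin_two_mul_pi_div_pos {m : ℕ} (hm : 2 < m) : 0 < sin (2 * (π / m)) := by
  have hm' : (2 : ℝ) < m := mod_cast hm
  refine sin_pos_of_pos_of_lt_pi (by positivity) ?_
  field_simp
  exact hm'

theorem eval_S_two_mul_cos {φ : ℝ} (hφ : sin φ ≠ 0) (n : ℤ) :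
    (S ℝ n).eval (2 * cos φ) = sin ((n + 1) * φ) / sin φ :=
  eq_div_of_mul_eq hφ (S_two_mul_real_cos φ n)

theorem reflection_mul_reflection_pow_eq_one {V : Type*} [AddCommGroup V] [Module ℝ V] {x y : V}
    {f g : Dual ℝ V} (hf : f x = 2) (hg : g y = 2) {m : ℕ} (hm : 2 < m)
    (hfy : f y = -(2 * cos (π / m))) (hgx : g x = -(2 * cos (π / m))) :
    (reflection hf * reflection hg) ^ m = 1 := by
  set φ := 2 * (π / m) with hφ
  have m_mul : m * φ = 2 * π := by
    rw [hφ]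
    field_simp
  have sin_ne_zero : sin φ ≠ 0 := (sin_two_mul_pi_div_pos hm).ne'
  have eval_S := eval_S_two_mul_cos sin_ne_zero
  have two_mul_cos_eq : 2 * cos φ = f y * g x - 2 := by
    rw [hfy, hgx, hφ, cos_two_mul]
    ring
  apply LinearEquiv.toLinearMap_injective
  rw [reflection_mul_reflection_pow hf hg m _ two_mul_cos_eq]
  -- Both coefficients are multiples of `S (k - 1)` if `m = 2 * k`, of `S k + S (k - 1)` otherwise.
  obtain ⟨k, rfl | rfl⟩ := m.even_or_odd'
  · have eval_eq_zero : (S ℝ ((k : ℤ) - 1)).eval (2 * cos φ) = 0 := by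
      have k_mul : k * φ = π := by
        push_cast at m_mul
        linarith
      simp [eval_S, k_mul]
    have sub_two_div : ((2 * k : ℕ) - 2 : ℤ) / 2 = k - 1 := by lia
    have sub_one_div : ((2 * k : ℕ) - 1 : ℤ) / 2 = k - 1 := by lia
    rw [sub_one_div, sub_two_div, eval_eq_zero]
    simp
  · have eval_add_eval_eq_zero :
        (S ℝ k).eval (2 * cos φ) + (S ℝ ((k : ℤ) - 1)).eval (2 * cos φ) = 0 := by
      have k_add_one_mul : (k + 1) * φ = 2 * π - k * φ := by
        push_cast at m_mul
        linarith
      simp [eval_S, k_add_one_mul, sin_two_pi_sub, neg_div]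
    have sub_three_div : ((2 * k + 1 : ℕ) - 3 : ℤ) / 2 = k - 1 := by lia
    have sub_two_div : ((2 * k + 1 : ℕ) - 2 : ℤ) / 2 = k - 1 := by lia
    have sub_one_div : ((2 * k + 1 : ℕ) - 1 : ℤ) / 2 = k := by lia
    have div_two : ((2 * k + 1 : ℕ) : ℤ) / 2 = k := by lia
    rw [div_two, sub_one_div, sub_two_div, sub_three_div, eval_add_eval_eq_zero]
    simp

/-- The functional `v ↦ 2 ⟨αᵢ, v⟩` for the Tits form on `B →₀ ℝ`, whose basis vectors are the
simple roots `αⱼ`. When `M i j = 0`, the convention `π / 0 = 0` gives the expected value `-2`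
at `αⱼ`. -/
noncomputable def simpleCoroot (M : CoxeterMatrix B) (i : B) : Dual ℝ (B →₀ ℝ) :=
  Finsupp.linearCombination ℝ fun j => -(2 * cos (π / M i j))

theorem simpleCoroot_single (i j : B) :
    simpleCoroot M i (Finsupp.single j 1) = -(2 * cos (π / M i j)) := by
  simp [simpleCoroot]

theorem simpleCoroot_single_self (i : B) : simpleCoroot M i (Finsupp.single i 1) = 2 := by
  simp [simpleCoroot_single]

/-- The reflection of `B →₀ ℝ` by which the `i`th simple generator acts in the geometric
representation. -/
noncomputable def simpleReflection (M : CoxeterMatrix B) (i : B) : (B →₀ ℝ) ≃ₗ[ℝ] (B →₀ ℝ) :=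
  reflection (simpleCoroot_single_self (M := M) i)

theorem isLiftable_simpleReflection : M.IsLiftable (simpleReflection M) := by
  intro i j
  have hji : simpleCoroot M j (Finsupp.single i 1) = -(2 * cos (π / M i j)) := by
    rw [simpleCoroot_single, M.symmetric]
  obtain hM | hM | hM | hM : M i j = 0 ∨ M i j = 1 ∨ M i j = 2 ∨ 2 < M i j := by lia
  · rw [hM, pow_zero]
  · obtain rfl : i = j := by_contra fun hij => M.off_diagonal i j hij hM
    rw [hM, pow_one]
    exact inv_mul_cancel (simpleReflection M i)
  · have hij := simpleCoroot_single (M := M) i j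
    simp only [hM, Nat.cast_ofNat, cos_pi_div_two, mul_zero, neg_zero] at hij hji
    rw [hM]
    exact reflection_mul_reflection_sq_eq_one _ _ hij hji
  · exact reflection_mul_reflection_pow_eq_one _ _ hM (simpleCoroot_single i j) hji

theorem simple_injective : Function.Injective cs.simple := by
  intro i j h
  by_contra hij
  have reflection_eq : simpleReflection M i = simpleReflection M j := by
    simpa only [lift_apply_simple] using congrArg (cs.lift ⟨_, isLiftable_simpleReflection⟩) h
  have coord_eq := congrArg (fun r => r (Finsupp.single i 1) i) reflection_eq
  simp only [simpleReflection, reflection_apply] at coord_eq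
  simp [simpleCoroot_single_self, Ne.symm hij] at coord_eq

end Geometric

section Descents

variable {cs}

theorem simple_mem_rightInvSeq_of_isRightDescent {ω : List B} {i : B}
    (h : cs.IsRightDescent (cs.wordProd ω) i) : cs.simple i ∈ cs.rightInvSeq ω := by
  classical
  obtain ⟨ω', hω', hprod'⟩ := cs.exists_isReduced (cs.wordProd ω * cs.simple i)
  have hprod : cs.wordProd (ω'.concat i) = cs.wordProd ω := by
    rw [wordProd_concat, ← hprod', simple_mul_simple_cancel_right]
  have hred : cs.IsReduced (ω'.concat i) := by
    rw [CoxeterSystem.IsReduced, hprod, ← cs.isRightDescent_iff.1 h, hprod', hω'.eq,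
      List.length_concat]
  have hmem : cs.simple i ∈ cs.rightInvSeq (ω'.concat i) := by
    rw [rightInvSeq_concat]
    simp
  have hcount := count_rightInvSeq_congr cs hprod (cs.simple i)
  rw [List.count_eq_one_of_mem hred.nodup_rightInvSeq hmem] at hcount
  by_contra hnotMem
  simp [List.count_eq_zero_of_not_mem hnotMem] at hcount

theorem finite_rightDescents (w : W) : (rightDescents cs w).Finite := by
  obtain ⟨ω, -, rfl⟩ := cs.exists_isReduced w
  refine .of_finite_image ((cs.rightInvSeq ω).finite_toSet.subset ?_) (simple_injective cs).injOn
  rintro _ ⟨i, hi, rfl⟩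
  exact simple_mem_rightInvSeq_of_isRightDescent hi

theorem isRightDescent_or_simple_mul_eq_mul_simple {w : W} {i j : B}
    (h : cs.IsRightDescent (cs.simple i * w) j) :
    cs.IsRightDescent w j ∨ cs.simple i * w = w * cs.simple j := by
  obtain ⟨ω, hω, rfl⟩ := cs.exists_isReduced w
  rw [← wordProd_cons] at h
  obtain hj | hj := List.mem_cons.1 (simple_mem_rightInvSeq_of_isRightDescent h)
  · right
    rw [hj]
    group
  · exact .inl (cs.isRightInversion_of_mem_rightInvSeq hω hj).2

theorem isRightDescent_mul_simple_of_ne {w : W} {i j : B} (hij : i ≠ j)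
    (hi : cs.IsRightDescent w i) (hj : cs.IsRightDescent w j) :
    cs.IsRightDescent (w * cs.simple i) j := by
  obtain ⟨ω, hω, hprod⟩ := cs.exists_isReduced (w * cs.simple j)
  have hw : w = cs.wordProd (ω.concat j) := by
    rw [wordProd_concat, ← hprod, simple_mul_simple_cancel_right]
  have hmem := simple_mem_rightInvSeq_of_isRightDescent (hw ▸ hi)
  rw [rightInvSeq_concat, List.concat_eq_append, List.mem_append, List.mem_singleton,
    (simple_injective cs).eq_iff, or_iff_left hij, List.mem_map] at hmem
  obtain ⟨r, hr, hri⟩ := hmem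
  have hlt := (cs.isRightInversion_of_mem_rightInvSeq hω hr).2
  have hconj : w * cs.simple i * cs.simple j = cs.wordProd ω * r := by
    rw [← hri, ← hprod]
    simp [mul_assoc]
  rw [IsRightDescent, hconj]
  rw [← hprod] at hlt ⊢
  have length_mul_i := cs.isRightDescent_iff.1 hi
  have length_mul_j := cs.isRightDescent_iff.1 hj
  lia

theorem leftDescents_inv (w : W) : leftDescents cs w⁻¹ = rightDescents cs w :=
  Set.ext fun _ => cs.isLeftDescent_inv_iff

theorem rightDescents_inv (w : W) : rightDescents cs w⁻¹ = leftDescents cs w :=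
  Set.ext fun _ => cs.isRightDescent_inv_iff

end Descents

section StarReduction

variable {cs} {s t : B} {y y' : W}

theorem RightStarReducible.exists_eq_mul_simple (h : RightStarReducible cs s t y y') :
    ∃ i j : B, cs.IsRightDescent y i ∧ ¬ cs.IsRightDescent y j ∧ y' = y * cs.simple i ∧
      cs.IsRightDescent y' j :=
  h.2.elim (fun h => ⟨s, t, h⟩) (fun h => ⟨t, s, h⟩)

theorem RightStarReducible.leftDescents_eq (h : RightStarReducible cs s t y y') :
    leftDescents cs y' = leftDescents cs y := by
  obtain ⟨i, j, hi, hj, rfl, hj'⟩ := h.exists_eq_mul_simple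
  have hlen := cs.isRightDescent_iff.1 hi
  ext u
  change cs.IsLeftDescent (y * cs.simple i) u ↔ cs.IsLeftDescent y u
  constructor <;> intro hu
  · have hle := cs.length_mul_le (cs.simple u * (y * cs.simple i)) (cs.simple i)
    rw [mul_assoc, simple_mul_simple_cancel_right, length_simple] at hle
    have := cs.isLeftDescent_iff.1 hu
    rw [IsLeftDescent]
    lia
  · by_contra hu'
    have hcomm : cs.simple u * (y * cs.simple i) = y := by
      have hui : cs.IsRightDescent (cs.simple u * (y * cs.simple i)) i := by
        have := cs.isLeftDescent_iff.1 hu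
        have := cs.not_isLeftDescent_iff.1 hu'
        rw [IsRightDescent, mul_assoc, simple_mul_simple_cancel_right]
        lia
      obtain h | h := isRightDescent_or_simple_mul_eq_mul_simple hui
      · exact absurd h (cs.isRightDescent_iff_not_isRightDescent_mul.1 hi)
      · rwa [simple_mul_simple_cancel_right] at h
    apply hj
    have hle := cs.length_mul_le (cs.simple u) (y * cs.simple i * cs.simple j)
    rw [← mul_assoc, hcomm, length_simple] at hle
    have := cs.isRightDescent_iff.1 hj'
    rw [IsRightDescent]
    lia

theorem RightStarReducible.ncard_rightDescents_le (h : RightStarReducible cs s t y y') :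
    (rightDescents cs y).ncard ≤ (rightDescents cs y').ncard := by
  obtain ⟨i, j, hi, hj, rfl, hj'⟩ := h.exists_eq_mul_simple
  have hsub : insert j (rightDescents cs y \ {i}) ⊆ rightDescents cs (y * cs.simple i) := by
    rintro u (rfl | ⟨hu, hui⟩)
    · exact hj'
    · exact isRightDescent_mul_simple_of_ne (Ne.symm hui) hi hu
  have hfin := finite_rightDescents (cs := cs) y
  calc (rightDescents cs y).ncard = (rightDescents cs y \ {i}).ncard + 1 :=
        (Set.ncard_sdiff_singleton_add_one (show i ∈ rightDescents cs y from hi) hfin).symm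
    _ = (insert j (rightDescents cs y \ {i})).ncard :=
        (Set.ncard_insert_of_notMem (fun h => hj h.1) (hfin.subset Set.sdiff_subset)).symm
    _ ≤ (rightDescents cs (y * cs.simple i)).ncard :=
        Set.ncard_le_ncard hsub (finite_rightDescents _)

theorem LeftStarReducible.inv (h : LeftStarReducible cs s t y y') :
    RightStarReducible cs s t y⁻¹ y'⁻¹ := by
  obtain ⟨hst, ⟨hs, ht, rfl, ht'⟩ | ⟨ht, hs, rfl, hs'⟩⟩ := h
  · exact ⟨hst, .inl ⟨by rwa [isRightDescent_inv_iff], by rwa [isRightDescent_inv_iff], by simp,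
      by rwa [isRightDescent_inv_iff]⟩⟩
  · exact ⟨hst, .inr ⟨by rwa [isRightDescent_inv_iff], by rwa [isRightDescent_inv_iff], by simp,
      by rwa [isRightDescent_inv_iff]⟩⟩

end StarReduction

theorem statement16_general (y : W) :
    (∀ (y' : W) (s t : B), LeftStarReducible cs s t y y' →
      rightDescents cs y' = rightDescents cs y ∧
      (leftDescents cs y).ncard ≤ (leftDescents cs y').ncard) ∧
    (∀ (y' : W) (s t : B), RightStarReducible cs s t y y' →
      leftDescents cs y' = leftDescents cs y ∧
      (rightDescents cs y).ncard ≤ (rightDescents cs y').ncard) := by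
  refine ⟨fun y' s t h => ?_, fun y' s t h => ⟨h.leftDescents_eq, h.ncard_rightDescents_le⟩⟩
  simpa only [leftDescents_inv, rightDescents_inv] using
    And.intro h.inv.leftDescents_eq h.inv.ncard_rightDescents_le

/-- If `y ∈ W_c` is left star reducible to `y′`, then `𝓡(y′) = 𝓡(y)` and
`|𝓛(y′)| ≥ |𝓛(y)|`; symmetrically, if `y` is right star reducible to `y′`, then
`𝓛(y′) = 𝓛(y)` and `|𝓡(y′)| ≥ |𝓡(y)|`. -/
theorem statement16 (y : W) (hy : FullyComm cs y) :
    (∀ (y' : W) (s t : B), LeftStarReducible cs s t y y' →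
      rightDescents cs y' = rightDescents cs y ∧
      (leftDescents cs y).ncard ≤ (leftDescents cs y').ncard) ∧
    (∀ (y' : W) (s t : B), RightStarReducible cs s t y y' →
      leftDescents cs y' = leftDescents cs y ∧
      (rightDescents cs y).ncard ≤ (rightDescents cs y').ncard) :=
  statement16_general cs y
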